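/- There exists a constant C₁ > 0 such that liminf_{n→∞} (1/n)·∫₀¹ √(∑_{m=1}^{n−1} |S_m(ω)|²) dω ≥ C₁. -/

import Mathlib

open MeasureTheory Real

/-- The quadratic Weyl sum `S_m(ω) = ∑_{j=1}^m exp(2πiω(j²-j))`. -/
noncomputable def S (ω : ℝ) (m : ℕ) : ℂ :=
  ∑ j ∈ Finset.Icc 1 m,
    Complex.exp (2 * (Real.pi : ℂ) * Complex.I * (ω : ℂ) * ((j : ℂ) ^ 2 - (j : ℂ)))

lemma S_zero (ω : ℝ) : S ω 0 = 0 := by simp [S]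

lemma S_succ (ω : ℝ) (m : ℕ) : S ω (m+1) = S ω m +
    Complex.exp (2 * (Real.pi : ℂ) * Complex.I * (ω : ℂ) * (((m+1:ℕ) : ℂ) ^ 2 - ((m+1:ℕ) : ℂ))) := by
  unfold S
  rw [Finset.sum_Icc_succ_top (by omega)]

noncomputable def Fw (n : ℕ) (ω : ℝ) : ℝ := ∑ m ∈ Finset.Icc 1 (n - 1), ‖S ω m‖ ^ 2

lemma S_cont (m : ℕ) : Continuous (fun ω => S ω m) := by
  unfold S; fun_prop

lemma Fw_cont (n : ℕ) : Continuous (Fw n) := by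
  unfold Fw
  have := S_cont
  fun_prop

lemma Fw_nonneg (n : ℕ) (ω : ℝ) : 0 ≤ Fw n ω := Finset.sum_nonneg fun _ _ => by positivity

lemma two_h {q : ℕ} [NeZero q] (hq : ¬ 4 ∣ q) (h : ZMod q) (h2 : 2 * h = 0) : h^2 - h = 0 := by
  obtain ⟨v, rfl⟩ : ∃ v : ℤ, (v : ZMod q) = h := ⟨h.val, by simp⟩
  have h3 : ((2 * v : ℤ) : ZMod q) = 0 := by push_cast; exact h2
  have : ((v^2 - v : ℤ) : ZMod q) = 0 := by
    rw [ZMod.intCast_zmod_eq_zero_iff_dvd] at h3 ⊢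
    have e : v^2 - v = v * (v-1) := by ring
    rcases Nat.even_or_odd' q with ⟨r, hr | hr⟩
    · have ho : ¬ 2 ∣ r := by
        rintro ⟨s, rfl⟩; apply hq; exact ⟨s, by omega⟩
      have hrv : (r:ℤ) ∣ v := by
        subst hr; push_cast at h3
        exact (mul_dvd_mul_iff_left (by norm_num)).1 h3
      have h2v : (2:ℤ) ∣ v * (v-1) := by
        rcases Int.even_or_odd' v with ⟨k, hk | hk⟩
        · exact Dvd.dvd.mul_right ⟨k, hk⟩ _
        · exact Dvd.dvd.mul_left ⟨k, by omega⟩ _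
      rw [e, hr]; push_cast
      refine IsCoprime.mul_dvd ?_ h2v (hrv.mul_right _)
      have : Nat.Coprime 2 r := Nat.coprime_two_left.2 (Nat.not_even_iff_odd.1 (fun h => ho h.two_dvd))
      exact_mod_cast Nat.isCoprime_iff_coprime.2 this
    · rw [e]
      refine Dvd.dvd.mul_right ?_ _
      refine IsCoprime.dvd_of_dvd_mul_left ?_ h3
      have : Nat.Coprime q 2 := Nat.coprime_two_right.2 ⟨r, hr⟩
      exact_mod_cast Nat.isCoprime_iff_coprime.2 this
  push_cast at this; exact this

lemma gauss {q : ℕ} [NeZero q] (hq : ¬ 4 ∣ q) (a : ZMod q) (ha : IsUnit a) :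
    (q : ℝ) ≤ ‖∑ x : ZMod q, ZMod.stdAddChar (a * (x^2 - x))‖^2 := by
  set ψ := ZMod.stdAddChar (N := q)
  set G := ∑ x : ZMod q, ψ (a * (x^2 - x)) with hG
  have hconj : ∀ x, starRingEnd ℂ (ψ x) = ψ (-x) := fun x => by
    rw [AddChar.map_neg_eq_conj]
  have key : G * starRingEnd ℂ G = q * (({h : ZMod q | 2 * h = 0} : Finset _).card : ℂ) := by
    calc G * starRingEnd ℂ G
        = ∑ x, ∑ y, ψ (a * (y^2-y)) * ψ (-(a * (x^2 - x))) := by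
          rw [hG, map_sum, Finset.sum_mul_sum, Finset.sum_comm]
          simp only [hconj]
      _ = ∑ x, ∑ h, ψ (a * (h^2-h)) * ψ (x * (2 * a * h)) := by
          refine Finset.sum_congr rfl fun x _ => ?_
          rw [← Equiv.sum_comp (Equiv.addLeft x)]
          refine Finset.sum_congr rfl fun h _ => ?_
          rw [← AddChar.map_add_eq_mul, ← AddChar.map_add_eq_mul]
          congr 1
          simp only [Equiv.coe_addLeft]; ring
      _ = ∑ h, ψ (a * (h^2-h)) * (if 2 * h = 0 then (q:ℂ) else 0) := by
          rw [Finset.sum_comm]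
          refine Finset.sum_congr rfl fun h _ => ?_
          rw [← Finset.mul_sum, AddChar.sum_mulShift _ (ZMod.isPrimitive_stdAddChar q)]
          congr 1
          have : 2 * a * h = 0 ↔ 2 * h = 0 := by
            rw [mul_comm 2 a, mul_assoc, ha.mul_right_eq_zero]
          simp [this, ZMod.card]
      _ = _ := by
          simp only [mul_ite, mul_zero]
          rw [← Finset.sum_filter]
          rw [Finset.sum_congr rfl (g := fun _ => (q:ℂ))]
          · simp [mul_comm]
          · intro h hh
            rw [two_h hq h (by simpa using hh)]; simp
  rw [Complex.mul_conj, Complex.normSq_eq_norm_sq] at key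
  have key' : ‖G‖^2 = q * (({h : ZMod q | 2 * h = 0} : Finset _).card : ℝ) := by exact_mod_cast key
  rw [key']
  have : 1 ≤ (({h : ZMod q | 2 * h = 0} : Finset _).card) :=
    Finset.card_pos.2 ⟨0, by simp⟩
  have : (1:ℝ) ≤ (({h : ZMod q | 2 * h = 0} : Finset _).card : ℝ) := by exact_mod_cast this
  have hq0 : (0:ℝ) ≤ q := by positivity
  nlinarith

lemma sum_period {q : ℕ} [NeZero q] (f : ZMod q → ℂ) (m : ℕ) :
    ∑ j ∈ Finset.range q, f ((m + j + 1 : ℕ) : ZMod q) = ∑ x, f x := by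
  refine Finset.sum_nbij (fun j => ((m + j + 1 : ℕ) : ZMod q)) (by simp) ?_ ?_ (by simp)
  · intro i hi j hj hij
    simp only [Finset.coe_range, Set.mem_Iio] at hi hj
    push_cast at hij
    have : (i : ZMod q) = j := by simpa using hij
    rw [ZMod.natCast_eq_natCast_iff'] at this
    rwa [Nat.mod_eq_of_lt hi, Nat.mod_eq_of_lt hj] at this
  · intro x _
    refine ⟨(x - m - 1).val, ?_, ?_⟩
    · simpa using ZMod.val_lt _
    · push_cast; simp; ring

lemma S_add (ω : ℝ) (m q : ℕ) : S ω (m+q) = S ω m + ∑ j ∈ Finset.range q, 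
    Complex.exp (2 * (Real.pi : ℂ) * Complex.I * (ω : ℂ) * (((m+j+1:ℕ) : ℂ) ^ 2 - ((m+j+1:ℕ) : ℂ))) := by
  induction q with
  | zero => simp
  | succ q ih => rw [← add_assoc, S_succ, ih, Finset.sum_range_succ, add_assoc]

lemma S_diff (r : ℚ) (hq : ¬ 4 ∣ r.den) (m : ℕ) : (r.den : ℝ) ≤ ‖S r (m + r.den) - S r m‖^2 := by
  have : NeZero r.den := ⟨r.den_nz⟩
  have hu : IsUnit (r.num : ZMod r.den) := by
    rw [ZMod.coe_int_isUnit_iff_isCoprime]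
    rw [Int.isCoprime_iff_gcd_eq_one]
    have := r.reduced
    rw [Nat.Coprime, Nat.gcd_comm] at this
    simpa [Int.gcd] using this
  refine (gauss hq (r.num : ZMod r.den) hu).trans (le_of_eq ?_)
  rw [S_add, add_sub_cancel_left, ← sum_period _ m]
  congr 2
  refine Finset.sum_congr rfl fun j _ => ?_
  have := ZMod.stdAddChar_coe (N := r.den) (r.num * (((m+j+1:ℕ):ℤ)^2 - ((m+j+1:ℕ):ℤ)))
  push_cast at this ⊢
  rw [this]
  congr 1
  have hr : ((r:ℝ):ℂ) = r.num / r.den := by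
    have := Rat.cast_def (K := ℂ) r
    simpa using this
  simp only [Complex.ofReal_ratCast] at hr
  rw [hr]; ring
  
lemma Fw_rat (r : ℚ) (hq : ¬ 4 ∣ r.den) (n : ℕ) (hn : r.den + 1 ≤ n) :
    ((n:ℝ) - 1 - r.den) * r.den ≤ 4 * Fw n r := by
  have h1 : ∀ m ∈ Finset.Icc 1 (n - 1 - r.den), (r.den : ℝ) ≤ 
      2 * ‖S r (m + r.den)‖^2 + 2 * ‖S r m‖^2 := by
    intro m _
    have := S_diff r hq m
    have h2 := norm_sub_le (S r (m+r.den)) (S r m)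
    have h3 := norm_nonneg (S r (m + r.den) - S r m)
    nlinarith [sq_nonneg (‖S r (m + r.den)‖ - ‖S r m‖)]
  have h2 := Finset.sum_le_sum h1
  rw [Finset.sum_const, Finset.sum_add_distrib, ← Finset.mul_sum, ← Finset.mul_sum] at h2
  have h3 : ∑ m ∈ Finset.Icc 1 (n - 1 - r.den), ‖S r m‖^2 ≤ Fw n r := by
    refine Finset.sum_le_sum_of_subset_of_nonneg ?_ fun _ _ _ => by positivity
    apply Finset.Icc_subset_Icc_right; omega
  have h4 : ∑ m ∈ Finset.Icc 1 (n - 1 - r.den), ‖S r (m + r.den)‖^2 ≤ Fw n r := by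
    rw [← Finset.sum_image (s := Finset.Icc 1 (n - 1 - r.den)) (g := fun m => m + r.den)
      (f := fun m => ‖S r m‖^2) (by intro a _ b _ h; simpa using h)]
    refine Finset.sum_le_sum_of_subset_of_nonneg ?_ fun _ _ _ => by positivity
    intro x hx
    simp only [Finset.mem_image, Finset.mem_Icc] at hx ⊢
    omega
  simp only [Nat.card_Icc, nsmul_eq_mul] at h2
  have h5 : ((n - 1 - r.den + 1 - 1 : ℕ) : ℝ) = (n:ℝ) - 1 - r.den := by
    rw [Nat.add_sub_cancel, Nat.cast_sub (by omega), Nat.cast_sub (by omega)]; simp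
  rw [h5] at h2
  linarith

lemma S_compare (ω r : ℝ) (D : ℝ) (n : ℕ) (hD : 4 * π * |ω - r| * n ≤ D) (m : ℕ) (hm : m ≤ n) :
    ‖S r m - Complex.exp (2 * (Real.pi : ℂ) * Complex.I * ((r - ω : ℝ) : ℂ) * ((m : ℂ) ^ 2 - (m : ℂ))) * S ω m‖
      ≤ D * ∑ k ∈ Finset.range m, ‖S ω k‖ := by
  induction m with
  | zero => simp [S_zero]
  | succ m ih =>
    have ih := ih (by omega)
    rw [Finset.sum_range_succ, mul_add]
    set u : ℕ → ℂ := fun m => Complex.exp (2 * (Real.pi : ℂ) * Complex.I * ((r - ω : ℝ) : ℂ) * ((m : ℂ) ^ 2 - (m : ℂ))) with hu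
    change ‖S r m - u m * S ω m‖ ≤ _ at ih
    change ‖S r (m+1) - u (m+1) * S ω (m+1)‖ ≤ _
    have e : S r (m+1) - u (m+1) * S ω (m+1) = (S r m - u m * S ω m) + (u m - u (m+1)) * S ω m := by
      rw [S_succ, S_succ]
      have : Complex.exp (2 * (Real.pi : ℂ) * Complex.I * (r : ℂ) * (((m+1:ℕ) : ℂ) ^ 2 - ((m+1:ℕ) : ℂ)))
        = u (m+1) * Complex.exp (2 * (Real.pi : ℂ) * Complex.I * (ω : ℂ) * (((m+1:ℕ) : ℂ) ^ 2 - ((m+1:ℕ) : ℂ))) := by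
        rw [hu, ← Complex.exp_add]; congr 1; push_cast; ring
      rw [this]; ring
    rw [e]
    refine (norm_add_le _ _).trans (add_le_add ih ?_)
    rw [norm_mul]
    refine mul_le_mul_of_nonneg_right ?_ (norm_nonneg _)
    refine le_trans ?_ hD
    have e2 : u (m+1) = u m * Complex.exp (Complex.I * ((4 * π * (r - ω) * m : ℝ) : ℂ)) := by
      simp only [hu]; rw [← Complex.exp_add]; congr 1; push_cast; ring
    have e3 : ‖u m‖ = 1 := by
      have : u m = Complex.exp (((2 * π * (r-ω) * ((m:ℝ)^2 - m) : ℝ):ℂ) * Complex.I) := by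
        simp only [hu]; congr 1; push_cast; ring
      rw [this, Complex.norm_exp_ofReal_mul_I]
    rw [e2, show ∀ x y : ℂ, x - x * y = -(x * (y - 1)) by intros; ring, norm_neg, norm_mul, e3, one_mul]
    refine (Real.norm_exp_I_mul_ofReal_sub_one_le).trans ?_
    rw [norm_mul, norm_mul, norm_mul, Real.norm_eq_abs (r-ω), abs_sub_comm]
    simp only [Real.norm_eq_abs, Nat.abs_cast, abs_of_pos Real.pi_pos]
    rw [abs_of_pos (by norm_num : (0:ℝ) < 4)]
    have : (m:ℝ) ≤ n := by exact_mod_cast (by omega : m ≤ n)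
    gcongr

lemma Fw_compare (ω r : ℝ) (D : ℝ) (n : ℕ) (hD : 4 * π * |ω - r| * n ≤ D) :
    Fw n r ≤ (2 + 2 * (D * n)^2) * Fw n ω := by
  have hD0 : 0 ≤ D := le_trans (by positivity) hD
  set T := ∑ k ∈ Finset.Icc 1 (n-1), ‖S ω k‖ with hT
  have hT0 : 0 ≤ T := Finset.sum_nonneg fun _ _ => norm_nonneg _
  have hcard : ((Finset.Icc 1 (n-1)).card : ℝ) ≤ n := by
    simp
  have hTF : T^2 ≤ n * Fw n ω := by
    refine sq_sum_le_card_mul_sum_sq.trans ?_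
    exact mul_le_mul_of_nonneg_right hcard (Fw_nonneg n ω)
  have h1 : ∀ m ∈ Finset.Icc 1 (n-1), ‖S r m‖^2 ≤ 2 * ‖S ω m‖^2 + 2 * (D * T)^2 := by
    intro m hm
    rw [Finset.mem_Icc] at hm
    have h := S_compare ω r D n hD m (by omega)
    have hle : ∑ k ∈ Finset.range m, ‖S ω k‖ ≤ T := by
      have : ∑ k ∈ Finset.range m, ‖S ω k‖ = ∑ k ∈ Finset.Ico 1 m, ‖S ω k‖ := by
        rw [Finset.range_eq_Ico, Finset.sum_eq_sum_Ico_succ_bot (by omega)]; simp [S_zero]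
      rw [this]
      refine Finset.sum_le_sum_of_subset_of_nonneg ?_ fun _ _ _ => by positivity
      intro x hx
      simp only [Finset.mem_Ico, Finset.mem_Icc] at hx ⊢
      omega
    have h2 : ‖S r m‖ ≤ ‖S ω m‖ + D * T := by
      set u := Complex.exp (2 * (Real.pi : ℂ) * Complex.I * ((r - ω : ℝ) : ℂ) * ((m : ℂ) ^ 2 - (m : ℂ))) with hu
      have e3 : ‖u‖ = 1 := by
        have : u = Complex.exp (((2 * π * (r-ω) * ((m:ℝ)^2 - m) : ℝ):ℂ) * Complex.I) := by
          rw [hu]; congr 1; push_cast; ring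
        rw [this, Complex.norm_exp_ofReal_mul_I]
      have h3 := norm_sub_norm_le (S r m) (u * S ω m)
      rw [norm_mul, e3, one_mul] at h3
      have := mul_le_mul_of_nonneg_left hle hD0
      linarith
    have h4 := norm_nonneg (S r m)
    have h5 := norm_nonneg (S ω m)
    nlinarith [sq_nonneg (‖S ω m‖ - D * T), mul_nonneg hD0 hT0]
  have h2 := Finset.sum_le_sum h1
  rw [Finset.sum_add_distrib, ← Finset.mul_sum, Finset.sum_const, nsmul_eq_mul] at h2
  change Fw n r ≤ 2 * Fw n ω + _ at h2
  have h3 : ((Finset.Icc 1 (n-1)).card : ℝ) * (2 * (D * T)^2) ≤ n * (2 * (D^2 * (n * Fw n ω))) := by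
    rw [mul_pow]; gcongr
  nlinarith

lemma Fw_good (n : ℕ) (hn : 8 ≤ n) (ω : ℝ) (r : ℚ) (h1 : |ω - r| ≤ 1 / ((((n/2 : ℕ) : ℝ) + 1) * r.den))
    (h2 : r.den ≤ n / 2) (h3 : ¬ 4 ∣ r.den) (h4 : ¬ 16 * r.den ≤ n / 2) :
    ((n:ℝ) / 100000)^2 ≤ Fw n ω := by
  have hn' : (8:ℝ) ≤ n := by exact_mod_cast hn
  have hQ : (n:ℝ) / 2 ≤ ((n/2 : ℕ) : ℝ) + 1 := by
    have : n ≤ 2 * (n/2 + 1) := by omega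
    have : (n:ℝ) ≤ 2 * (((n/2 : ℕ) : ℝ) + 1) := by exact_mod_cast this
    linarith
  have hq : (n:ℝ) / 32 ≤ r.den := by
    have : n ≤ 32 * r.den := by omega
    have : (n:ℝ) ≤ 32 * r.den := by exact_mod_cast this
    linarith
  have hq2 : (r.den : ℝ) ≤ n / 2 := by
    have : 2 * r.den ≤ n := by omega
    have : 2 * (r.den:ℝ) ≤ n := by exact_mod_cast this
    linarith
  have hb : |ω - r| ≤ 64 / (n:ℝ)^2 := by
    refine h1.trans ?_
    rw [show 64 / (n:ℝ)^2 = 1 / ((n/2) * (n/32)) by field_simp; norm_num]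
    gcongr
  have hr := Fw_rat r h3 n (by omega)
  have hD : 4 * π * |ω - r| * n ≤ 1024 / n := by
    calc 4 * π * |ω - r| * n ≤ 4 * 4 * (64 / (n:ℝ)^2) * n := by
          have := Real.pi_le_four
          gcongr
      _ = 1024 / n := by field_simp; norm_num
  have hc := Fw_compare ω r (1024 / n) n hD
  have : (1024 / (n:ℝ) * n) = 1024 := by field_simp
  rw [this] at hc
  have h5 : (n:ℝ)/4 * (n/32) ≤ ((n:ℝ) - 1 - r.den) * r.den := by
    apply mul_le_mul <;> linarith
  nlinarith [Fw_nonneg n ω]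

lemma badcard (Q : ℕ) (hQ : 0 < Q) :
    ∑ q ∈ (Finset.Icc 1 Q).filter (fun q => 16 * q ≤ Q ∨ 4 ∣ q), ((q:ℝ)+1) * (2 * (1 / (((Q:ℝ)+1) * q))) ≤ 7/8 := by
  rw [Finset.filter_or]
  have hQ0 : (0:ℝ) < Q := by exact_mod_cast hQ
  have hun : ∀ (s t : Finset ℕ) (f : ℕ → ℝ), (∀ x, 0 ≤ f x) →
      ∑ x ∈ s ∪ t, f x ≤ ∑ x ∈ s, f x + ∑ x ∈ t, f x := by
    intro s t f hf
    rw [← Finset.sum_union_inter]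
    have := Finset.sum_nonneg (s := s ∩ t) (fun i _ => hf i)
    linarith
  refine (hun _ _ _ fun x => by positivity).trans ?_
  have h1 : ∑ q ∈ (Finset.Icc 1 Q).filter (fun q => 16 * q ≤ Q),
      ((q:ℝ)+1) * (2 * (1 / (((Q:ℝ)+1) * q))) ≤ 1/4 := by
    refine (Finset.sum_le_card_nsmul _ _ (4 / (Q:ℝ)) ?_).trans ?_
    · intro q hq
      rw [Finset.mem_filter, Finset.mem_Icc] at hq
      have hq1 : (1:ℝ) ≤ q := by exact_mod_cast hq.1.1
      rw [show ((q:ℝ)+1) * (2 * (1 / (((Q:ℝ)+1) * q))) = (2 * (q+1)) / (((Q:ℝ)+1) * q) by ring,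
        div_le_div_iff₀ (by positivity) (by positivity)]
      nlinarith
    · have hc : ((Finset.Icc 1 Q).filter (fun q => 16 * q ≤ Q)).card ≤ Q / 16 := by
        have : (Finset.Icc 1 Q).filter (fun q => 16 * q ≤ Q) ⊆ Finset.Icc 1 (Q/16) := by
          intro x hx
          simp only [Finset.mem_filter, Finset.mem_Icc] at hx ⊢
          omega
        simpa using Finset.card_le_card this
      have hc2 : 16 * ((Finset.Icc 1 Q).filter (fun q => 16 * q ≤ Q)).card ≤ Q := by omega
      have hc3 : 16 * (((Finset.Icc 1 Q).filter (fun q => 16 * q ≤ Q)).card : ℝ) ≤ Q := by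
        exact_mod_cast hc2
      rw [nsmul_eq_mul, mul_div_assoc', div_le_iff₀ hQ0]
      linarith
  have h2 : ∑ q ∈ (Finset.Icc 1 Q).filter (fun q => 4 ∣ q),
      ((q:ℝ)+1) * (2 * (1 / (((Q:ℝ)+1) * q))) ≤ 5/8 := by
    refine (Finset.sum_le_card_nsmul _ _ ((5/2) / (Q:ℝ)) ?_).trans ?_
    · intro q hq
      rw [Finset.mem_filter, Finset.mem_Icc] at hq
      have hq1 : (4:ℝ) ≤ q := by exact_mod_cast Nat.le_of_dvd hq.1.1 hq.2
      rw [show ((q:ℝ)+1) * (2 * (1 / (((Q:ℝ)+1) * q))) = (2 * (q+1)) / (((Q:ℝ)+1) * q) by ring,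
        div_le_div_iff₀ (by positivity) (by positivity)]
      nlinarith
    · have hc : ((Finset.Icc 1 Q).filter (fun q => 4 ∣ q)).card = Q / 4 :=
        Nat.Ioc_filter_dvd_card_eq_div Q 4
      have hc2 : 4 * ((Finset.Icc 1 Q).filter (fun q => 4 ∣ q)).card ≤ Q := by omega
      have hc3 : 4 * (((Finset.Icc 1 Q).filter (fun q => 4 ∣ q)).card : ℝ) ≤ Q := by
        exact_mod_cast hc2
      rw [nsmul_eq_mul, mul_div_assoc', div_le_iff₀ hQ0]
      linarith
  linarith

lemma good_measure (n : ℕ) (hn : 8 ≤ n) :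
    1/8 ≤ volume.real ({ω : ℝ | ((n:ℝ) / 100000)^2 ≤ Fw n ω} ∩ Set.Ioc 0 1) := by
  set A := {ω : ℝ | ((n:ℝ) / 100000)^2 ≤ Fw n ω} ∩ Set.Ioc 0 1 with hA
  set B : Finset ℕ := (Finset.Icc 1 (n/2)).filter (fun q => 16 * q ≤ n/2 ∨ 4 ∣ q) with hB
  set U : Set ℝ := ⋃ q ∈ B, ⋃ a ∈ Finset.range (q+1), 
    Metric.closedBall ((a:ℝ)/q) (1 / ((((n/2 : ℕ) : ℝ) + 1) * q)) with hU
  have hcov : Set.Ioc (0:ℝ) 1 ⊆ A ∪ U := by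
    intro ω hω
    by_cases hF : ((n:ℝ) / 100000)^2 ≤ Fw n ω
    · exact Or.inl ⟨hF, hω⟩
    right
    obtain ⟨r, h1, h2⟩ := Real.exists_rat_abs_sub_le_and_den_le ω (n := n/2) (by omega)
    have hbad : r.den ∈ B := by
      rw [hB, Finset.mem_filter, Finset.mem_Icc]
      refine ⟨⟨r.den_pos, h2⟩, ?_⟩
      by_contra hcon
      push Not at hcon
      exact hF (Fw_good n hn ω r h1 h2 hcon.2 (by omega))
    have hd : (0:ℝ) < r.den := by exact_mod_cast r.den_pos
    have hd1 : (1:ℝ) ≤ r.den := by exact_mod_cast r.den_pos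
    have hQ : (2:ℝ) ≤ ((n/2:ℕ):ℝ) := by exact_mod_cast (by omega : 2 ≤ n/2)
    have hlt : 1 / ((((n/2 : ℕ) : ℝ) + 1) * r.den) < 1 / r.den := by
      apply one_div_lt_one_div_of_lt hd
      nlinarith
    have hr : (r:ℝ) = r.num / r.den := Rat.cast_def r
    have h5 := abs_le.1 h1
    have hmul : (1 / (r.den:ℝ)) * r.den = 1 := by field_simp
    have hnum : (r:ℝ) * r.den = r.num := by rw [hr]; field_simp
    have hlo : -1 < r.num := by
      have : (-1:ℝ) < r.num := by
        rw [← hnum]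
        have : -(1 / (r.den:ℝ)) < r := by linarith [hω.1]
        nlinarith
      exact_mod_cast this
    have hhi : r.num < r.den + 1 := by
      have : (r.num:ℝ) < r.den + 1 := by
        rw [← hnum]
        have : (r:ℝ) < 1 + 1 / (r.den:ℝ) := by linarith [hω.2]
        nlinarith
      exact_mod_cast this
    rw [hU]
    simp only [Set.mem_iUnion]
    refine ⟨r.den, hbad, r.num.toNat, ?_, ?_⟩
    · rw [Finset.mem_range]; omega
    · rw [Metric.mem_closedBall, Real.dist_eq]
      have : ((r.num.toNat : ℕ) : ℝ) = r.num := by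
        have : ((r.num.toNat : ℕ) : ℤ) = r.num := by omega
        exact_mod_cast congrArg (Int.cast : ℤ → ℝ) this
      rw [this, ← hr]
      exact h1
  have hUm : volume U ≤ ENNReal.ofReal (7/8) := by
    calc volume U ≤ ∑ q ∈ B, volume (⋃ a ∈ Finset.range (q+1), 
            Metric.closedBall ((a:ℝ)/q) (1 / ((((n/2 : ℕ) : ℝ) + 1) * q))) := measure_biUnion_finset_le _ _
      _ ≤ ∑ q ∈ B, ∑ a ∈ Finset.range (q+1), volume (
            Metric.closedBall ((a:ℝ)/q) (1 / ((((n/2 : ℕ) : ℝ) + 1) * q))) := 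
          Finset.sum_le_sum fun q _ => measure_biUnion_finset_le _ _
      _ = ∑ q ∈ B, ENNReal.ofReal (((q:ℝ)+1) * (2 * (1 / ((((n/2:ℕ):ℝ)+1) * q)))) := by
          refine Finset.sum_congr rfl fun q _ => ?_
          simp only [Real.volume_closedBall, Finset.sum_const, Finset.card_range]
          rw [← ENNReal.ofReal_nsmul, nsmul_eq_mul]
          push_cast; rfl
      _ = ENNReal.ofReal (∑ q ∈ B, ((q:ℝ)+1) * (2 * (1 / ((((n/2:ℕ):ℝ)+1) * q)))) := by
          rw [ENNReal.ofReal_sum_of_nonneg]; intro q _; positivity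
      _ ≤ _ := ENNReal.ofReal_le_ofReal (badcard (n/2) (by omega))
  have hA1 : volume A ≠ ⊤ := ((measure_mono Set.inter_subset_right).trans_lt (by simp)).ne
  have h1 : (1:ENNReal) ≤ volume A + ENNReal.ofReal (7/8) := by
    calc (1:ENNReal) = volume (Set.Ioc (0:ℝ) 1) := by simp
      _ ≤ volume (A ∪ U) := measure_mono hcov
      _ ≤ _ := (measure_union_le _ _).trans (by gcongr)
  have h2 := ENNReal.toReal_mono (by simp [hA1]) h1
  rw [ENNReal.toReal_add hA1 (by simp), ENNReal.toReal_ofReal (by norm_num)] at h2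
  simp only [ENNReal.toReal_one] at h2
  rw [measureReal_def]; linarith

lemma lower (n : ℕ) (hn : 8 ≤ n) : 1/800000 ≤ (1 / (n:ℝ)) * ∫ ω in (0:ℝ)..1, √(Fw n ω) := by
  have hn' : (8:ℝ) ≤ n := by exact_mod_cast hn
  have hc : Continuous fun ω => √(Fw n ω) := (Fw_cont n).sqrt
  have hi : IntegrableOn (fun ω => √(Fw n ω)) (Set.Ioc 0 1) := 
    (hc.continuousOn.integrableOn_Icc).mono_set Set.Ioc_subset_Icc_self
  have hm := good_measure n hn
  set A := {ω : ℝ | ((n:ℝ) / 100000)^2 ≤ Fw n ω} ∩ Set.Ioc 0 1 with hA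
  have hAm : MeasurableSet A := 
    (measurableSet_le measurable_const (Fw_cont n).measurable).inter measurableSet_Ioc
  have hAf : volume A ≠ ⊤ := ((measure_mono Set.inter_subset_right).trans_lt (by simp)).ne
  have h1 : ∫ ω in A, √(Fw n ω) ≤ ∫ ω in Set.Ioc 0 1, √(Fw n ω) := 
    setIntegral_mono_set hi (Filter.Eventually.of_forall fun _ => Real.sqrt_nonneg _)
      (Set.inter_subset_right).eventuallyLE
  have h2 : (n:ℝ)/100000 * volume.real A ≤ ∫ ω in A, √(Fw n ω) := by
    have := setIntegral_mono_on (μ := volume) (s := A) (f := fun _ => (n:ℝ)/100000) (g := fun ω => √(Fw n ω))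
      (integrableOn_const hAf) (hi.mono_set Set.inter_subset_right) hAm
      (fun x hx => Real.le_sqrt_of_sq_le hx.1)
    rw [setIntegral_const, smul_eq_mul, mul_comm] at this
    exact this
  rw [intervalIntegral.integral_of_le zero_le_one]
  have h3 : (n:ℝ)/100000 * (1/8) ≤ (n:ℝ)/100000 * volume.real A := by gcongr
  have h4 : (n:ℝ) / 800000 ≤ ∫ ω in Set.Ioc 0 1, √(Fw n ω) := by linarith
  calc (1:ℝ)/800000 = 1/n * (n / 800000) := by field_simp
    _ ≤ _ := by gcongr

lemma int_exp (d : ℤ) : ∫ ω in (0:ℝ)..1, Complex.exp (2 * π * Complex.I * d * ω) = if d = 0 then 1 else 0 := by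
  split_ifs with h
  · simp [h]
  · have hc : 2 * (π:ℂ) * Complex.I * d ≠ 0 := by
      simp [h, Real.pi_ne_zero]
    rw [integral_exp_mul_complex hc]
    have : Complex.exp (2 * π * Complex.I * d) = 1 := by
      rw [Complex.exp_eq_one_iff]; exact ⟨d, by ring⟩
    simp [this]

lemma parseval (m : ℕ) : ∫ ω in (0:ℝ)..1, ‖S ω m‖^2 = m := by
  have h : ∫ ω in (0:ℝ)..1, ((‖S ω m‖^2 : ℝ) : ℂ) = m := by
    have e : ∀ ω : ℝ, ((‖S ω m‖^2 : ℝ) : ℂ) = ∑ j ∈ Finset.Icc 1 m, ∑ k ∈ Finset.Icc 1 m,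
        Complex.exp (2 * π * Complex.I * (((j:ℤ)^2 - j - (k^2 - k) : ℤ):ℂ) * ω) := by
      intro ω
      rw [← Complex.normSq_eq_norm_sq, ← Complex.mul_conj]
      unfold S
      rw [map_sum, Finset.sum_mul_sum]
      refine Finset.sum_congr rfl fun j _ => Finset.sum_congr rfl fun k _ => ?_
      rw [← Complex.exp_conj, ← Complex.exp_add]
      congr 1
      have h2 : starRingEnd ℂ (2:ℂ) = 2 := Complex.conj_ofNat 2
      simp [h2]
      ring
    simp only [e]
    rw [intervalIntegral.integral_finsetSum]
    · rw [Finset.sum_congr rfl (g := fun _ => (1:ℂ))]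
      · simp
      · intro j hj
        rw [intervalIntegral.integral_finsetSum]
        · simp only [int_exp]
          rw [Finset.sum_eq_single j]
          · simp
          · intro k hk hkj
            rw [if_neg]
            intro h0
            have h1 : ((j:ℤ) - k) * (j + k - 1) = 0 := by linear_combination h0
            rw [Finset.mem_Icc] at hj hk
            rcases mul_eq_zero.1 h1 with h | h <;> omega
          · intro h; exact absurd hj h
        · intro k _
          exact Continuous.intervalIntegrable (by fun_prop) _ _
    · intro k _
      exact Continuous.intervalIntegrable (by fun_prop) _ _
  rw [intervalIntegral.integral_ofReal] at h
  exact_mod_cast h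

lemma upper (n : ℕ) (hn : 8 ≤ n) : (1 / (n:ℝ)) * ∫ ω in (0:ℝ)..1, √(Fw n ω) ≤ 2 := by
  have hn' : (8:ℝ) ≤ n := by exact_mod_cast hn
  have hF : ∫ ω in (0:ℝ)..1, Fw n ω ≤ n * n := by
    unfold Fw
    rw [intervalIntegral.integral_finsetSum]
    · simp only [parseval]
      refine (Finset.sum_le_card_nsmul _ _ (n:ℝ) ?_).trans ?_
      · intro m hm
        rw [Finset.mem_Icc] at hm
        exact_mod_cast (by omega : m ≤ n)
      · rw [nsmul_eq_mul]
        gcongr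
        simp
    · intro k _
      exact ((S_cont k).norm.pow 2).intervalIntegrable _ _
  have h1 : ∫ ω in (0:ℝ)..1, √(Fw n ω) ≤ ∫ ω in (0:ℝ)..1, (n + (1/n) * Fw n ω) := by
    refine intervalIntegral.integral_mono_on zero_le_one ((Fw_cont n).sqrt.intervalIntegrable _ _) 
      ((continuous_const.add (continuous_const.mul (Fw_cont n))).intervalIntegrable _ _) ?_
    intro ω _
    have hs := Real.sq_sqrt (Fw_nonneg n ω)
    have h0 := Real.sqrt_nonneg (Fw n ω)
    set s := √(Fw n ω)
    rw [← hs]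
    have : (n:ℝ) + 1/n * s^2 - s = (1/n) * ((n - s/2)^2 + 3/4 * s^2) := by field_simp; ring
    have : 0 ≤ (n:ℝ) + 1/n * s^2 - s := by rw [this]; positivity
    linarith
  have hI : IntervalIntegrable (fun ω => 1 / (n:ℝ) * Fw n ω) volume 0 1 :=
    (continuous_const.mul (Fw_cont n)).intervalIntegrable _ _
  rw [intervalIntegral.integral_add (by simp) hI,
    intervalIntegral.integral_const_mul] at h1
  simp only [intervalIntegral.integral_const, sub_zero, one_smul] at h1
  calc (1 / (n:ℝ)) * ∫ ω in (0:ℝ)..1, √(Fw n ω) ≤ 1/n * (n + 1/n * (n * n)) := by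
        gcongr; refine h1.trans ?_; gcongr
    _ = 2 := by field_simp; norm_num
    
/-- There is a constant `C₁ > 0` with
`liminf_{n→∞} (1/n) ∫₀¹ √(∑_{m=1}^{n-1} |S_m(ω)|²) dω ≥ C₁`. -/
theorem stmt_11 :
    ∃ C₁ > (0 : ℝ),
      C₁ ≤ Filter.liminf
        (fun n : ℕ =>
          (1 / (n : ℝ)) *
            ∫ ω in (0:ℝ)..1, Real.sqrt (∑ m ∈ Finset.Icc 1 (n - 1), ‖S ω m‖ ^ 2))
        Filter.atTop := by
  refine ⟨1/800000, by norm_num, ?_⟩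
  apply Filter.le_liminf_of_le
  · apply Filter.IsCoboundedUnder.of_frequently_le (a := 2)
    apply Filter.Eventually.frequently
    filter_upwards [Filter.eventually_ge_atTop 8] with n hn
    exact upper n hn
  · filter_upwards [Filter.eventually_ge_atTop 8] with n hn
    exact lower n hn
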